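/- Let G be a hyperbolic group, let h ∈ G be an element of infinite order, and suppose there exist a ∈ G and integers p ≠ 0 and q such that h^q = a h^p a^{-1} in G. Then there exist a nonzero integer r and an integer s such that a^r = h^s; in particular the cyclic subgroup ⟨a⟩ is a finite extension of a subgroup of ⟨h⟩ (the subgroup ⟨a^r⟩ ≤ ⟨h⟩ has finite index in ⟨a⟩). -/

import Mathlib

/-- The word metric on a group `G` with respect to a generating set `S`:
`wordDist S g h` is the least length of a word in `S ∪ S⁻¹` representing `g⁻¹ * h`. -/
noncomputable def wordDist {G : Type*} [Group G] (S : Set G) (g h : G) : ℝ :=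
  sInf {r : ℝ | ∃ l : List G, (∀ x ∈ l, x ∈ S ∨ x⁻¹ ∈ S) ∧ l.prod = g⁻¹ * h ∧ r = l.length}

/-- The Gromov product `(x|y)_w` with respect to the word metric for `S`. -/
noncomputable def gromovProd {G : Type*} [Group G] (S : Set G) (w x y : G) : ℝ :=
  (wordDist S x w + wordDist S y w - wordDist S x y) / 2

/-- A group is (Gromov) hyperbolic if it admits a finite generating set `S` such that
the word metric `d_S` satisfies the Gromov product four-point condition for some `δ ≥ 0`. -/
def IsHyperbolicGroup (G : Type*) [Group G] : Prop :=
  ∃ S : Set G, S.Finite ∧ Subgroup.closure S = ⊤ ∧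
    ∃ δ : ℝ, 0 ≤ δ ∧ ∀ w x y z : G,
      gromovProd S w x y ≥ min (gromovProd S w x z) (gromovProd S w y z) - δ

/-!
Let `G` act uniformly properly by isometries on a hyperbolic space, and let `h` have infinite
order. Take a point `x` deep inside a long geodesic from `o` to `h ^ M • o`. If a small power of
`h` moves `x` substantially, then it moves `x` away from one end of the geodesic, and so its square
moves `x` about twice as far. Uniform properness prevents all small powers from moving `x` only a
little, hence some `g = h ^ n` has this doubling property at some `x`, and the four-point condition
propagates it to all powers: the orbit `g ^ i • x` is a quasigeodesic.

Now let `a` conjugate `g ^ p` to `g ^ q`. Comparing displacements of high powers gives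
`|p| = |q|`, so `a ^ 2` commutes with `g ^ |p|`. An element commuting with `g ^ |p|` carries the
quasigeodesic to one at finite distance, and hyperbolicity makes this distance uniform. All powers
of `a ^ 2` therefore lie within a uniform distance of powers of `g ^ |p|`, and by the pigeonhole
principle a nontrivial power of `a ^ 2` is a power of `g ^ |p|`.
-/

section HyperbolicSpace

variable {X : Type*} [PseudoMetricSpace X] {δ : ℝ}

/-- The Gromov product `(x|y)_w` in an arbitrary pseudometric space. -/
noncomputable def gromovProduct (w x y : X) : ℝ :=
  (dist x w + dist y w - dist x y) / 2

/-- Gromov's `δ`-hyperbolicity of a pseudometric space, as an inequality of Gromov products. -/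
def IsGromovHyperbolic (X : Type*) [PseudoMetricSpace X] (δ : ℝ) : Prop :=
  ∀ w x y z : X, min (gromovProduct w x z) (gromovProduct w y z) - δ ≤ gromovProduct w x y

/-- A coarse form of geodesicity shared by geodesic spaces and by vertex sets of graphs: between
any two points there is a point at each prescribed integral distance from the first. -/
def IsIntegrallyGeodesic (X : Type*) [PseudoMetricSpace X] : Prop :=
  ∀ (x y : X) (k : ℕ), (k : ℝ) ≤ dist x y →
    ∃ z, dist x z = k ∧ dist x z + dist z y = dist x y

lemma gromovProduct_comm (w x y : X) : gromovProduct w x y = gromovProduct w y x := by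
  simp only [gromovProduct, dist_comm x y, add_comm (dist x w)]

lemma gromovProduct_self (w x : X) : gromovProduct w x x = dist x w := by
  simp [gromovProduct]

lemma dist_sub_dist_le_gromovProduct (w x y : X) : dist x w - dist x y ≤ gromovProduct w x y := by
  unfold gromovProduct
  linarith [dist_triangle x y w]

lemma gromovProduct_le_gromovProduct_add_dist (w x y z : X) :
    gromovProduct w x z ≤ gromovProduct w y z + dist x y := by
  unfold gromovProduct
  linarith [dist_triangle x y w, dist_triangle y x z, dist_comm x y]

lemma dist_le_gromovProduct_add_gromovProduct (w x y z : X) :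
    dist y w ≤
      gromovProduct w x y + gromovProduct w y z + (dist x y + dist y z - dist x z) / 2 := by
  unfold gromovProduct
  linarith [dist_triangle x w z, dist_comm w z]

namespace IsGromovHyperbolic

lemma mono (hX : IsGromovHyperbolic X δ) {δ' : ℝ} (hδ : δ ≤ δ') : IsGromovHyperbolic X δ' :=
  fun w x y z => (sub_le_sub_left hδ _).trans (hX w x y z)

lemma four_point (hX : IsGromovHyperbolic X δ) (x y z w : X) :
    dist x y + dist z w ≤ max (dist x z + dist y w) (dist y z + dist x w) + 2 * δ := by
  have h := hX w x y z
  unfold gromovProduct at h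
  grind

lemma gromovProduct_le_add_of_lt (hX : IsGromovHyperbolic X δ) {w x y z : X} {C : ℝ}
    (hC : gromovProduct w x y ≤ C) (hz : C + δ < gromovProduct w x z) :
    gromovProduct w z y ≤ C + δ := by
  have h := hX w x y z
  rw [gromovProduct_comm w z y]
  grind

-- The first `i` with `(u 0|u i)_w ≤ C + δ` works: its minimality gives the same bound for
-- `(u (i - 1)|u n)_w`.
lemma exists_dist_le_of_gromovProduct_le (hX : IsGromovHyperbolic X δ) {u : ℕ → X} {w : X}
    {n : ℕ} {C E L : ℝ} (hL : ∀ i, dist (u i) (u (i + 1)) ≤ L)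
    (hE : ∀ i ≤ n, dist (u 0) (u i) + dist (u i) (u n) ≤ dist (u 0) (u n) + E)
    (hC : gromovProduct w (u 0) (u n) ≤ C) (hδ : 0 ≤ δ) :
    ∃ i, dist (u i) w ≤ 2 * (C + δ) + L + E / 2 := by
  classical
  have hex : ∃ i, gromovProduct w (u 0) (u i) ≤ C + δ := ⟨n, by linarith⟩
  have hle : Nat.find hex ≤ n := Nat.find_min' hex (by linarith)
  have hfirst := Nat.find_spec hex
  have hE₀ : 0 ≤ E := by simpa using hE 0 n.zero_le
  have hL₀ : 0 ≤ L := dist_nonneg.trans (hL 0)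
  refine ⟨Nat.find hex, ?_⟩
  cases hi : Nat.find hex with
  | zero =>
    rw [hi, gromovProduct_self] at hfirst
    linarith [dist_nonneg (x := u 0) (y := w)]
  | succ i =>
    rw [hi] at hfirst hle
    have hbefore : C + δ < gromovProduct w (u 0) (u i) :=
      not_le.mp (Nat.find_min hex (by omega))
    have hlast : gromovProduct w (u i) (u n) ≤ C + δ := hX.gromovProduct_le_add_of_lt hC hbefore
    have hstep := gromovProduct_le_gromovProduct_add_dist w (u (i + 1)) (u i) (u n)
    rw [dist_comm] at hstep
    linarith [dist_le_gromovProduct_add_gromovProduct w (u 0) (u (i + 1)) (u n), hE _ hle, hL i]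

end IsGromovHyperbolic

end HyperbolicSpace

section Group

variable {G : Type*} [Group G]

lemma commute_sq_of_conj_eq_or_eq_inv {a u : G} (h : a * u * a⁻¹ = u ∨ a * u * a⁻¹ = u⁻¹) :
    Commute (a ^ 2) u := by
  have hsq : a ^ 2 * u * (a ^ 2)⁻¹ = a * (a * u * a⁻¹) * a⁻¹ := by
    simp only [pow_two, mul_inv_rev, mul_assoc]
  refine mul_inv_eq_iff_eq_mul.mp (hsq.trans ?_)
  rcases h with h | h
  · rw [h, h]
  · rw [h, ← conj_inv, h, inv_inv]

lemma finiteIndex_zpowers_zpow_subgroupOf (a : G) {r : ℤ} (hr : r ≠ 0) :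
    ((Subgroup.zpowers (a ^ r)).subgroupOf (Subgroup.zpowers a)).FiniteIndex := by
  let φ := zpowersHom G a
  have hpow : (Subgroup.zpowers (Multiplicative.ofAdd r)).map φ = Subgroup.zpowers (a ^ r) := by
    simp [φ, MonoidHom.map_zpowers]
  have hrange : (⊤ : Subgroup (Multiplicative ℤ)).map φ = Subgroup.zpowers a := by
    rw [← MonoidHom.range_eq_map]; rfl
  have hindex : (Subgroup.zpowers (Multiplicative.ofAdd r)).index = r.natAbs :=
    Int.index_zmultiples r
  have hdvd : (Subgroup.zpowers (a ^ r)).relIndex (Subgroup.zpowers a) ∣ r.natAbs := by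
    rw [← hpow, ← hrange, Subgroup.relIndex_map_map, top_sup_eq, Subgroup.relIndex_top_right,
      ← hindex]
    exact Subgroup.index_dvd_of_le le_sup_left
  exact ⟨ne_zero_of_dvd_ne_zero (Int.natAbs_ne_zero.mpr hr) hdvd⟩

end Group

section Action

variable {G X : Type*} [Group G] [PseudoMetricSpace X] [MulAction G X]

/-- An action on a pseudometric space is uniformly proper if the number of elements displacing a
point by at most `K` is bounded independently of the point. -/
def IsUniformlyProper (G X : Type*) [Group G] [PseudoMetricSpace X] [MulAction G X] : Prop :=
  ∀ K : ℝ, ∃ N : ℕ, ∀ x : X, {g : G | dist x (g • x) ≤ K}.encard ≤ N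

/-- The local condition certifying that `g` is loxodromic on a `δ`-hyperbolic space: `g ^ 2` moves
`x` by definitely more than `g` does. -/
def HasDisplacementGap (δ : ℝ) (g : G) (x : X) : Prop :=
  dist x (g • x) + 4 * δ ≤ dist x (g ^ 2 • x)

/-- The orbit `n ↦ g ^ n • x` satisfies the reverse triangle inequality up to the error `E`; this
is the form in which we use that it is a quasigeodesic. -/
def IsQuasiAdditiveOrbit (E : ℝ) (g : G) (x : X) : Prop :=
  ∀ i j : ℕ, dist x (g ^ i • x) + dist x (g ^ j • x) ≤ dist x (g ^ (i + j) • x) + E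

lemma IsUniformlyProper.finite (hGX : IsUniformlyProper G X) (x : X) (K : ℝ) :
    {g : G | dist x (g • x) ≤ K}.Finite :=
  have ⟨_, hN⟩ := hGX K
  Set.finite_of_encard_le_coe (hN x)

lemma IsUniformlyProper.exists_lt_dist_pow_smul (hGX : IsUniformlyProper G X) {g : G}
    (hg : ¬IsOfFinOrder g) (x : X) (C : ℝ) : ∃ n : ℕ, C < dist x (g ^ n • x) := by
  by_contra! hbdd
  exact Set.infinite_of_injective_forall_mem (injective_pow_iff_not_isOfFinOrder.mpr hg) hbdd
    (hGX.finite x C)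

lemma IsQuasiAdditiveOrbit.pow {E : ℝ} {g : G} {x : X} (hg : IsQuasiAdditiveOrbit E g x) (k : ℕ) :
    IsQuasiAdditiveOrbit E (g ^ k) x := fun i j => by
  simpa only [← pow_mul, mul_add] using hg (k * i) (k * j)

variable [IsIsometricSMul G X] {δ : ℝ}

lemma dist_pow_smul_pow_add_smul (g : G) (x : X) (i j : ℕ) :
    dist (g ^ i • x) (g ^ (i + j) • x) = dist x (g ^ j • x) := by
  rw [pow_add, mul_smul, dist_smul]

lemma dist_inv_mul_smul (g k : G) (x : X) : dist x ((g⁻¹ * k) • x) = dist (g • x) (k • x) := by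
  rw [← dist_smul g x, smul_smul, mul_inv_cancel_left]

lemma dist_inv_smul_self (g : G) (x : X) : dist x (g⁻¹ • x) = dist x (g • x) := by
  rw [← dist_smul g x, smul_inv_smul, dist_comm]

lemma dist_zpow_smul_eq_dist_pow_natAbs_smul (g : G) (n : ℤ) (x : X) :
    dist x (g ^ n • x) = dist x (g ^ n.natAbs • x) := by
  obtain ⟨k, rfl | rfl⟩ := n.eq_nat_or_neg
  · simp
  · simp [dist_inv_smul_self]

lemma dist_pow_smul_le (g : G) (x : X) (n : ℕ) : dist x (g ^ n • x) ≤ n * dist x (g • x) := by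
  induction n with
  | zero => simp
  | succ n ih =>
    have hstep := dist_pow_smul_pow_add_smul g x n 1
    rw [pow_one] at hstep
    push_cast
    linarith [dist_triangle x (g ^ n • x) (g ^ (n + 1) • x)]

lemma dist_conj_smul_le (a g : G) (x : X) :
    dist x ((a * g * a⁻¹) • x) ≤ dist x (g • x) + 2 * dist x (a • x) := calc
  dist x ((a * g * a⁻¹) • x)
    ≤ dist x (a • x) + dist (a • x) (a • g • x) + dist (a • g • x) ((a * g * a⁻¹) • x) :=
      dist_triangle4 ..
  _ = dist x (g • x) + 2 * dist x (a • x) := by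
    simp only [mul_smul, dist_smul, dist_inv_smul_self]
    ring

namespace IsGromovHyperbolic

lemma two_mul_dist_smul_sub_le_of_moves_away (hX : IsGromovHyperbolic X δ) {g : G} {x v : X}
    {D : ℝ} (hD : dist v (g • v) ≤ D) (hfar : D + 2 * δ < dist x v)
    (haway : dist x (g • x) ≤ dist (g • x) v - dist x v + 2 * δ) :
    2 * dist x (g • x) - 6 * δ ≤ dist x (g ^ 2 • x) := by
  have hfour := hX.four_point (g • g • x) (g • v) (g • x) v
  rw [dist_smul, dist_smul, dist_smul, dist_comm (g • x) x, dist_comm v x,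
    dist_comm (g • v) v] at hfour
  have hgxv : dist x v ≤ dist (g • x) v + D := by
    linarith [dist_triangle (g • x) v (g • v), dist_smul g x v]
  have htri := dist_triangle (g • g • x) x v
  rw [dist_comm _ x] at htri
  rw [pow_two, mul_smul]
  grind

-- Hyperbolicity forces `g` to move a point between `v` and `v'` away from one of the two.
lemma two_mul_dist_smul_sub_le_of_between (hX : IsGromovHyperbolic X δ) {g : G} {x v v' : X}
    {D : ℝ} (hv : dist v (g • v) ≤ D) (hv' : dist v' (g • v') ≤ D)
    (hxv : D + 2 * δ < dist x v) (hxv' : D + 2 * δ < dist x v')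
    (hx : dist v x + dist x v' = dist v v') :
    2 * dist x (g • x) - 6 * δ ≤ dist x (g ^ 2 • x) := by
  have hfour := hX.four_point x (g • x) v v'
  rw [← hx, dist_comm v x] at hfour
  rcases le_total (dist x v + dist (g • x) v') (dist (g • x) v + dist x v') with hle | hle
  · rw [max_eq_right hle] at hfour
    exact hX.two_mul_dist_smul_sub_le_of_moves_away hv hxv (by linarith)
  · rw [max_eq_left hle] at hfour
    exact hX.two_mul_dist_smul_sub_le_of_moves_away hv' hxv' (by linarith)

lemma exists_forall_two_mul_dist_pow_smul_sub_le (hX : IsGromovHyperbolic X δ)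
    (hgeod : IsIntegrallyGeodesic X) (hGX : IsUniformlyProper G X) [Nonempty X] {g : G}
    (hg : ¬IsOfFinOrder g) (N : ℕ) :
    ∃ x : X, ∀ n ≤ N, 2 * dist x (g ^ n • x) - 6 * δ ≤ dist x ((g ^ n) ^ 2 • x) := by
  obtain ⟨o⟩ := ‹Nonempty X›
  obtain ⟨T, hT⟩ := exists_nat_gt (N * dist o (g • o) + 2 * δ)
  obtain ⟨M, hM⟩ := hGX.exists_lt_dist_pow_smul hg o (2 * T)
  obtain ⟨x, hox, hbetween⟩ := hgeod o (g ^ M • o) T (by linarith [T.cast_nonneg (α := ℝ)])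
  refine ⟨x, fun n hn => ?_⟩
  have hdisp : dist o (g ^ n • o) ≤ N * dist o (g • o) :=
    (dist_pow_smul_le g o n).trans (by gcongr)
  have hdisp' : dist (g ^ M • o) (g ^ n • g ^ M • o) ≤ N * dist o (g • o) := by
    rwa [smul_smul, ← pow_add, add_comm, dist_pow_smul_pow_add_smul]
  exact hX.two_mul_dist_smul_sub_le_of_between hdisp hdisp' (by rwa [dist_comm x, hox])
    (by linarith) hbetween

-- Without a gap, `N + 1` powers of `g` would move a common point by less than `10 * δ`,
-- one more than uniform properness allows.
lemma exists_pow_hasDisplacementGap (hX : IsGromovHyperbolic X δ)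
    (hgeod : IsIntegrallyGeodesic X) (hGX : IsUniformlyProper G X) [Nonempty X] {g : G}
    (hg : ¬IsOfFinOrder g) : ∃ n : ℕ, n ≠ 0 ∧ ∃ x : X, HasDisplacementGap δ (g ^ n) x := by
  by_contra! hgap
  obtain ⟨N, hN⟩ := hGX (10 * δ)
  obtain ⟨x, hx⟩ := hX.exists_forall_two_mul_dist_pow_smul_sub_le hgeod hGX hg (N + 1)
  have hmaps : Set.MapsTo (g ^ ·) (Finset.Icc 1 (N + 1) : Set ℕ)
      {k : G | dist x (k • x) ≤ 10 * δ} := fun n hn => by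
    obtain ⟨hn₁, hnN⟩ := Finset.mem_Icc.mp hn
    have hnogap := hgap n (by omega) x
    rw [HasDisplacementGap, not_le] at hnogap
    change dist x (g ^ n • x) ≤ 10 * δ
    linarith [hx n hnN]
  have hcard := (Set.encard_le_encard_of_injOn hmaps
    (injective_pow_iff_not_isOfFinOrder.mpr hg).injOn).trans (hN x)
  rw [Set.encard_coe_eq_coe_finsetCard, Nat.card_Icc, Nat.cast_le] at hcard
  omega

end IsGromovHyperbolic

namespace HasDisplacementGap

variable {g : G} {x : X}

lemma dist_pow_smul_add_le (hgap : HasDisplacementGap δ g x) (hX : IsGromovHyperbolic X δ)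
    (hδ : 0 < δ) (n : ℕ) : dist x (g ^ n • x) + 2 * δ ≤ dist x (g ^ (n + 1) • x) := by
  unfold HasDisplacementGap at hgap
  induction n with
  | zero =>
    have hsq := dist_pow_smul_le g x 2
    push_cast at hsq
    simp only [pow_zero, one_smul, dist_self, zero_add, pow_one]
    linarith
  | succ n ih =>
    have hfour := hX.four_point x (g ^ (n + 1) • x) (g ^ n • x) (g ^ (n + 2) • x)
    rw [dist_comm (g ^ (n + 1) • x) (g ^ n • x), dist_pow_smul_pow_add_smul g x n 2,
      dist_pow_smul_pow_add_smul g x n 1, dist_pow_smul_pow_add_smul g x (n + 1) 1,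
      pow_one] at hfour
    grind

lemma isQuasiAdditiveOrbit (hgap : HasDisplacementGap δ g x) (hX : IsGromovHyperbolic X δ)
    (hδ : 0 < δ) : IsQuasiAdditiveOrbit (dist x (g • x) + 2 * δ) g x
  | i, 0 => by
    simp only [pow_zero, one_smul, dist_self, add_zero]
    linarith [dist_nonneg (x := x) (y := g • x)]
  | i, j + 1 => by
    have hfour := hX.four_point x (g ^ (i + 1) • x) (g ^ i • x) (g ^ (i + (j + 1)) • x)
    rw [dist_comm (g ^ (i + 1) • x) (g ^ i • x), dist_pow_smul_pow_add_smul g x i (j + 1),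
      dist_pow_smul_pow_add_smul g x i 1, pow_one, show i + (j + 1) = i + 1 + j by omega,
      dist_pow_smul_pow_add_smul g x (i + 1) j] at hfour
    have hi := hgap.dist_pow_smul_add_le hX hδ i
    have hj := hgap.dist_pow_smul_add_le hX hδ j
    rw [show i + (j + 1) = i + 1 + j by omega]
    grind

end HasDisplacementGap

namespace IsQuasiAdditiveOrbit

variable {E : ℝ} {g : G} {x : X}

lemma gromovProduct_le (hg : IsQuasiAdditiveOrbit E g x) (n : ℕ) :
    gromovProduct (g ^ n • x) x (g ^ (n + n) • x) ≤ E / 2 := by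
  unfold gromovProduct
  rw [dist_comm (g ^ (n + n) • x), dist_pow_smul_pow_add_smul]
  linarith [hg n n]

-- `b` translates the orbit segment from `x` to `g ^ (n + n) • x` to one through `b • g ^ n • x`
-- whose endpoints are moved only by `dist x (b • x)`, which is negligible for large `n`.
lemma gromovProduct_smul_le (hg : IsQuasiAdditiveOrbit E g x) (hX : IsGromovHyperbolic X δ)
    (hδ : 0 ≤ δ) {b : G} (hb : Commute b g) {n : ℕ}
    (hn : dist x (b • x) + E / 2 + 2 * δ < dist x (g ^ n • x)) :
    gromovProduct (b • g ^ n • x) x (g ^ (n + n) • x) ≤ E / 2 + 2 * δ := by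
  have htranslate : gromovProduct (b • g ^ n • x) (b • x) (b • g ^ (n + n) • x) ≤ E / 2 := by
    simpa only [gromovProduct, dist_smul] using hg.gromovProduct_le n
  have hstart : E / 2 + δ < gromovProduct (b • g ^ n • x) (b • x) x := by
    have h := dist_sub_dist_le_gromovProduct (b • g ^ n • x) (b • x) x
    rw [dist_smul, dist_comm (b • x) x] at h
    linarith
  have hend : E / 2 + δ + δ < gromovProduct (b • g ^ n • x) (b • g ^ (n + n) • x)
      (g ^ (n + n) • x) := by
    have h := dist_sub_dist_le_gromovProduct (b • g ^ n • x) (b • g ^ (n + n) • x)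
      (g ^ (n + n) • x)
    have hmoved : dist (b • g ^ (n + n) • x) (g ^ (n + n) • x) = dist x (b • x) := by
      rw [smul_smul, (hb.pow_right (n + n)).eq, mul_smul, dist_smul, dist_comm]
    rw [hmoved, dist_smul, dist_comm (g ^ (n + n) • x), dist_pow_smul_pow_add_smul] at h
    linarith
  have hmid := hX.gromovProduct_le_add_of_lt htranslate hstart
  rw [gromovProduct_comm] at hmid ⊢
  linarith [hX.gromovProduct_le_add_of_lt hmid hend]

lemma exists_dist_zpow_smul_le_of_commute (hg : IsQuasiAdditiveOrbit E g x)
    (hX : IsGromovHyperbolic X δ) (hδ : 0 ≤ δ) (hGX : IsUniformlyProper G X)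
    (hord : ¬IsOfFinOrder g) {b : G} (hb : Commute b g) :
    ∃ i : ℤ, dist (b • x) (g ^ i • x) ≤ 2 * (E / 2 + 3 * δ) + dist x (g • x) + E / 2 := by
  obtain ⟨n, hn⟩ := hGX.exists_lt_dist_pow_smul hord x (dist x (b • x) + E / 2 + 2 * δ)
  obtain ⟨i, hi⟩ := hX.exists_dist_le_of_gromovProduct_le (u := fun i => g ^ i • x)
    (w := b • g ^ n • x) (n := n + n) (C := E / 2 + 2 * δ) (E := E) (L := dist x (g • x))
    (fun i => by rw [dist_pow_smul_pow_add_smul, pow_one])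
    (fun i hi => by
      obtain ⟨j, hj⟩ := Nat.exists_eq_add_of_le hi
      simpa only [hj, dist_pow_smul_pow_add_smul, pow_zero, one_smul] using hg i j)
    (by simpa only [pow_zero, one_smul] using hg.gromovProduct_smul_le hX hδ hb hn) hδ
  refine ⟨i - n, ?_⟩
  have hshift : dist (b • x) (g ^ (i - n : ℤ) • x) = dist (g ^ i • x) (b • g ^ n • x) := by
    rw [← dist_smul (g ^ n), smul_smul, smul_smul, ← (hb.pow_right n).eq, mul_smul,
      ← zpow_natCast g n, ← zpow_add, add_sub_cancel, zpow_natCast g i, dist_comm]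
  linarith

lemma exists_zpow_eq_zpow_of_commute (hg : IsQuasiAdditiveOrbit E g x)
    (hX : IsGromovHyperbolic X δ) (hδ : 0 ≤ δ) (hGX : IsUniformlyProper G X)
    (hord : ¬IsOfFinOrder g) {b : G} (hb : Commute b g) :
    ∃ r s : ℤ, r ≠ 0 ∧ b ^ r = g ^ s := by
  choose i hi using fun k : ℕ =>
    hg.exists_dist_zpow_smul_le_of_commute hX hδ hGX hord (hb.pow_left k)
  obtain ⟨m, -, n, -, hmn, heq⟩ := Set.infinite_univ.exists_ne_map_eq_of_mapsTo
    (f := fun k : ℕ => (b ^ k)⁻¹ * g ^ i k)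
    (fun k _ => (dist_inv_mul_smul _ _ x).trans_le (hi k)) (hGX.finite x _)
  refine ⟨n - m, i n - i m, by omega, ?_⟩
  calc b ^ (n - m : ℤ) = b ^ n * ((b ^ m)⁻¹ * g ^ i m) * (g ^ i m)⁻¹ := by
        rw [zpow_sub, zpow_natCast, zpow_natCast]; group
    _ = b ^ n * ((b ^ n)⁻¹ * g ^ i n) * (g ^ i m)⁻¹ := by rw [heq]
    _ = g ^ (i n - i m) := by rw [mul_inv_cancel_left, zpow_sub]

-- If `|p| < |q|`, conjugating `g ^ (p * n)` to `g ^ (q * n)` for all `n` would bound the orbit of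
-- `g ^ (|q| - |p|)`.
lemma natAbs_le_natAbs_of_conj (hg : IsQuasiAdditiveOrbit E g x) (hGX : IsUniformlyProper G X)
    (hord : ¬IsOfFinOrder g) {a : G} {p q : ℤ} (hconj : g ^ q = a * g ^ p * a⁻¹) :
    q.natAbs ≤ p.natAbs := by
  by_contra! hlt
  obtain ⟨d, hd⟩ := Nat.exists_eq_add_of_lt hlt
  obtain ⟨n, hn⟩ := hGX.exists_lt_dist_pow_smul
    (fun hfin => hord (hfin.of_pow d.succ_ne_zero)) x (2 * dist x (a • x) + E)
  have hconj' : g ^ (q * n) = a * g ^ (p * n) * a⁻¹ := by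
    rw [zpow_mul, hconj, conj_zpow, zpow_mul]
  have hle := dist_conj_smul_le a (g ^ (p * n)) x
  rw [← hconj', dist_zpow_smul_eq_dist_pow_natAbs_smul, dist_zpow_smul_eq_dist_pow_natAbs_smul,
    Int.natAbs_mul, Int.natAbs_mul, Int.natAbs_natCast, hd, add_assoc, add_mul] at hle
  have hadd := hg (p.natAbs * n) ((d + 1) * n)
  rw [pow_mul g (d + 1)] at hadd
  linarith

lemma exists_zpow_eq_zpow_of_conj (hg : IsQuasiAdditiveOrbit E g x)
    (hX : IsGromovHyperbolic X δ) (hδ : 0 ≤ δ) (hGX : IsUniformlyProper G X)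
    (hord : ¬IsOfFinOrder g) {a : G} {p q : ℤ} (hp : p ≠ 0) (hconj : g ^ q = a * g ^ p * a⁻¹) :
    ∃ r s : ℤ, r ≠ 0 ∧ a ^ r = g ^ s := by
  have habs : q.natAbs = p.natAbs :=
    (hg.natAbs_le_natAbs_of_conj hGX hord hconj).antisymm
      (hg.natAbs_le_natAbs_of_conj hGX hord (a := a⁻¹) (by rw [hconj]; group))
  have hcomm : Commute (a ^ 2) (g ^ p) := commute_sq_of_conj_eq_or_eq_inv <| by
    rw [← hconj, ← zpow_neg]
    exact (Int.natAbs_eq_natAbs_iff.mp habs).imp (congrArg _) (congrArg _)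
  have hcomm' : Commute (a ^ 2) (g ^ p.natAbs) := by
    simpa only [← zpow_mul, Int.mul_sign_self, zpow_natCast] using hcomm.zpow_right p.sign
  obtain ⟨r, s, hr, hrs⟩ := (hg.pow p.natAbs).exists_zpow_eq_zpow_of_commute hX hδ hGX
    (fun hfin => hord (hfin.of_pow (Int.natAbs_ne_zero.mpr hp))) hcomm'
  refine ⟨2 * r, p.natAbs * s, by omega, ?_⟩
  rw [zpow_mul, zpow_mul, zpow_natCast, ← hrs, zpow_ofNat]

end IsQuasiAdditiveOrbit

end Action

section WordMetric

variable {G : Type*} [Group G] {S : Set G}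

/-- The list `l` spells a word in the alphabet `S ∪ S⁻¹`. -/
def IsWord (S : Set G) (l : List G) : Prop :=
  ∀ x ∈ l, x ∈ S ∨ x⁻¹ ∈ S

lemma IsWord.append {l m : List G} (hl : IsWord S l) (hm : IsWord S m) : IsWord S (l ++ m) :=
  fun x hx => (List.mem_append.mp hx).elim (hl x) (hm x)

lemma IsWord.map_inv_reverse {l : List G} (hl : IsWord S l) : IsWord S (l.map (·⁻¹)).reverse := by
  intro x hx
  obtain ⟨y, hy, rfl⟩ := List.mem_map.mp (List.mem_reverse.mp hx)
  rw [inv_inv]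
  exact (hl y hy).symm

lemma exists_isWord_prod_eq (hS : Subgroup.closure S = ⊤) (g : G) :
    ∃ l, IsWord S l ∧ l.prod = g := by
  have hg : g ∈ (Subgroup.closure S).toSubmonoid := by simp [hS]
  rw [Subgroup.closure_toSubmonoid] at hg
  exact Submonoid.exists_list_of_mem_closure hg

lemma wordDist_le_length {l : List G} (hl : IsWord S l) {g h : G} (hprod : l.prod = g⁻¹ * h) :
    wordDist S g h ≤ l.length :=
  csInf_le ⟨0, by rintro _ ⟨m, -, -, rfl⟩; positivity⟩ ⟨l, hl, hprod, rfl⟩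

lemma exists_isWord_length_eq_wordDist (hS : Subgroup.closure S = ⊤) (g h : G) :
    ∃ l, IsWord S l ∧ l.prod = g⁻¹ * h ∧ l.length = wordDist S g h := by
  classical
  have hex : ∃ n : ℕ, ∃ l, IsWord S l ∧ l.prod = g⁻¹ * h ∧ l.length = n :=
    have ⟨l, hl, hprod⟩ := exists_isWord_prod_eq hS (g⁻¹ * h)
    ⟨_, l, hl, hprod, rfl⟩
  obtain ⟨l, hl, hprod, hlen⟩ := Nat.find_spec hex
  refine ⟨l, hl, hprod, le_antisymm ?_ (wordDist_le_length hl hprod)⟩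
  refine le_csInf ⟨_, l, hl, hprod, rfl⟩ ?_
  rintro _ ⟨m, hm, hmprod, rfl⟩
  exact_mod_cast hlen.trans_le (Nat.find_min' hex ⟨m, hm, hmprod, rfl⟩)

lemma wordDist_mul_left (S : Set G) (k g h : G) : wordDist S (k * g) (k * h) = wordDist S g h := by
  simp [wordDist, mul_assoc]

lemma wordDist_self (S : Set G) (g : G) : wordDist S g g = 0 :=
  le_antisymm
    ((wordDist_le_length (l := []) (by simp [IsWord]) (by simp)).trans_eq (by simp))
    (Real.sInf_nonneg (by rintro _ ⟨l, -, -, rfl⟩; positivity))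

lemma wordDist_comm_le (hS : Subgroup.closure S = ⊤) (g h : G) :
    wordDist S h g ≤ wordDist S g h := by
  obtain ⟨l, hl, hprod, hlen⟩ := exists_isWord_length_eq_wordDist hS g h
  rw [← hlen]
  refine (wordDist_le_length hl.map_inv_reverse ?_).trans_eq (by simp)
  rw [← List.prod_inv_reverse, hprod, mul_inv_rev, inv_inv]

lemma wordDist_triangle (hS : Subgroup.closure S = ⊤) (g h k : G) :
    wordDist S g k ≤ wordDist S g h + wordDist S h k := by
  obtain ⟨l, hl, hlprod, hllen⟩ := exists_isWord_length_eq_wordDist hS g h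
  obtain ⟨m, hm, hmprod, hmlen⟩ := exists_isWord_length_eq_wordDist hS h k
  rw [← hllen, ← hmlen]
  refine (wordDist_le_length (hl.append hm) ?_).trans_eq (by simp)
  rw [List.prod_append, hlprod, hmprod, mul_assoc, mul_inv_cancel_left]

/-- The word metric of a generating set `S` as a pseudometric structure on the group. -/
noncomputable abbrev wordPseudoMetricSpace (hS : Subgroup.closure S = ⊤) :
    PseudoMetricSpace G where
  dist := wordDist S
  dist_self := wordDist_self S
  dist_comm g h := (wordDist_comm_le hS h g).antisymm (wordDist_comm_le hS g h)
  dist_triangle := wordDist_triangle hS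

lemma isIsometricSMul_wordPseudoMetricSpace (hS : Subgroup.closure S = ⊤) :
    letI := wordPseudoMetricSpace hS
    IsIsometricSMul G G :=
  letI := wordPseudoMetricSpace hS
  ⟨fun k => Isometry.of_dist_eq (wordDist_mul_left S k)⟩

lemma isIntegrallyGeodesic_wordPseudoMetricSpace (hS : Subgroup.closure S = ⊤) :
    letI := wordPseudoMetricSpace hS
    IsIntegrallyGeodesic G := by
  let _ := wordPseudoMetricSpace hS
  intro g h k hk
  obtain ⟨l, hl, hprod, hlen⟩ := exists_isWord_length_eq_wordDist hS g h
  have hkl : k ≤ l.length := by exact_mod_cast hk.trans_eq hlen.symm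
  have htake : dist g (g * (l.take k).prod) ≤ k := by
    have hword : IsWord S (l.take k) := fun x hx => hl x (List.mem_of_mem_take hx)
    refine (wordDist_le_length hword ?_).trans_eq ?_
    · rw [inv_mul_cancel_left]
    · rw [List.length_take, min_eq_left hkl]
  have hdrop : dist (g * (l.take k).prod) h ≤ dist g h - k := by
    have hword : IsWord S (l.drop k) := fun x hx => hl x (List.mem_of_mem_drop hx)
    refine (wordDist_le_length hword ?_).trans_eq ?_
    · rw [mul_inv_rev, mul_assoc, ← hprod, ← List.prod_take_mul_prod_drop l k,
        inv_mul_cancel_left]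
    · rw [List.length_drop, Nat.cast_sub hkl, hlen]
      rfl
  have htri := dist_triangle g (g * (l.take k).prod) h
  exact ⟨g * (l.take k).prod, by linarith, by linarith⟩

lemma finite_setOf_wordDist_le (hS : Subgroup.closure S = ⊤) (hfin : S.Finite) (K : ℝ) :
    {g | wordDist S 1 g ≤ K}.Finite := by
  have : Finite {x | x ∈ S ∨ x⁻¹ ∈ S} := hfin.union hfin.inv
  refine ((List.finite_length_le {x | x ∈ S ∨ x⁻¹ ∈ S} ⌊K⌋₊).image
    fun l => (l.map Subtype.val).prod).subset fun g hg => ?_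
  obtain ⟨l, hl, hprod, hlen⟩ := exists_isWord_length_eq_wordDist hS 1 g
  lift l to List {x | x ∈ S ∨ x⁻¹ ∈ S} using hl
  rw [List.length_map] at hlen
  exact ⟨l, Nat.le_floor (hlen.trans_le hg), by simpa using hprod⟩

lemma isUniformlyProper_of_finite_setOf_dist_one_le [PseudoMetricSpace G] [IsIsometricSMul G G]
    (hfin : ∀ K : ℝ, {g : G | dist 1 g ≤ K}.Finite) : IsUniformlyProper G G := by
  intro K
  refine ⟨(hfin K).toFinset.card, fun x => ?_⟩
  rw [← Set.encard_coe_eq_coe_finsetCard, Set.Finite.coe_toFinset]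
  refine Set.encard_le_encard_of_injOn (f := fun g => x⁻¹ * g * x) (fun g hg => ?_) ?_
  · have hdist : dist 1 (x⁻¹ * g * x) = dist x (g • x) := by
      rw [← dist_smul x]; simp [mul_assoc]
    exact hdist.trans_le hg
  · exact fun g _ k _ hgk => by simpa using hgk

lemma IsHyperbolicGroup.exists_pseudoMetricSpace (hG : IsHyperbolicGroup G) :
    ∃ (_ : PseudoMetricSpace G) (_ : IsIsometricSMul G G) (δ : ℝ),
      IsGromovHyperbolic G δ ∧ IsIntegrallyGeodesic G ∧ IsUniformlyProper G G := by
  obtain ⟨S, hfin, hS, δ, -, hhyp⟩ := hG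
  let _ := wordPseudoMetricSpace hS
  have := isIsometricSMul_wordPseudoMetricSpace hS
  exact ⟨_, ‹_›, δ, hhyp, isIntegrallyGeodesic_wordPseudoMetricSpace hS,
    isUniformlyProper_of_finite_setOf_dist_one_le (finite_setOf_wordDist_le hS hfin)⟩

end WordMetric

theorem stmt_2_general {G X : Type*} [Group G] [PseudoMetricSpace X] [Nonempty X]
    [MulAction G X] [IsIsometricSMul G X] {δ : ℝ} (hX : IsGromovHyperbolic X δ)
    (hgeod : IsIntegrallyGeodesic X) (hGX : IsUniformlyProper G X) {h a : G}
    (hord : ¬IsOfFinOrder h) {p q : ℤ} (hp : p ≠ 0) (hconj : h ^ q = a * h ^ p * a⁻¹) :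
    ∃ r s : ℤ, r ≠ 0 ∧ a ^ r = h ^ s ∧
      Subgroup.zpowers (a ^ r) ≤ Subgroup.zpowers h ∧
      ((Subgroup.zpowers (a ^ r)).subgroupOf (Subgroup.zpowers a)).FiniteIndex := by
  have hX' : IsGromovHyperbolic X (max δ 1) := hX.mono (le_max_left δ 1)
  have hδ : 0 < max δ 1 := by positivity
  obtain ⟨n, hn, x, hgap⟩ := hX'.exists_pow_hasDisplacementGap hgeod hGX hord
  have hconj' : (h ^ n) ^ q = a * (h ^ n) ^ p * a⁻¹ := by
    rw [← zpow_natCast, zpow_comm, hconj, conj_zpow, zpow_comm]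
  obtain ⟨r, s, hr, hrs⟩ := (hgap.isQuasiAdditiveOrbit hX' hδ).exists_zpow_eq_zpow_of_conj
    hX' hδ.le hGX (fun hfin => hord (hfin.of_pow hn)) hp hconj'
  have hpow : a ^ r = h ^ (n * s) := by rw [hrs, zpow_mul, zpow_natCast]
  exact ⟨r, n * s, hr, hpow, Subgroup.zpowers_le.mpr ⟨n * s, hpow.symm⟩,
    finiteIndex_zpowers_zpow_subgroupOf a hr⟩

/-- In a hyperbolic group, if `h` has infinite order, `p ≠ 0` and `h^q = a h^p a⁻¹`,
then some nonzero power of `a` is a power of `h`; in particular the subgroup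
`⟨a^r⟩ ≤ ⟨h⟩` has finite index in `⟨a⟩`. -/
theorem stmt_2 {G : Type*} [Group G] (hG : IsHyperbolicGroup G)
    (h : G) (hord : ∀ n : ℤ, n ≠ 0 → h ^ n ≠ 1)
    (a : G) (p q : ℤ) (hp : p ≠ 0) (hconj : h ^ q = a * h ^ p * a⁻¹) :
    ∃ r s : ℤ, r ≠ 0 ∧ a ^ r = h ^ s ∧
      Subgroup.zpowers (a ^ r) ≤ Subgroup.zpowers h ∧
      ((Subgroup.zpowers (a ^ r)).subgroupOf (Subgroup.zpowers a)).FiniteIndex := by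
  obtain ⟨_, _, δ, hhyp, hgeod, hproper⟩ := hG.exists_pseudoMetricSpace
  have hinf : ¬IsOfFinOrder h := by simpa [isOfFinOrder_iff_zpow_eq_one] using hord
  exact stmt_2_general hhyp hgeod hproper hinf hp hconj
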